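/- Let a_n = 4·B_{n+2}·(2^{n+2} − 1)/(n+2) for each non-negative integer n (the angle defect sequence). Then a_0 = 1, and for every positive integer n one has a_n + Σ_{i=0}^{n−1} (a_i/2)·C(n+1, i+1) = 1, where C(m,k) denotes the binomial coefficient. -/

import Mathlib

noncomputable section

namespace AngleDefectPaper

/-- The angle defect sequence `a_n = 4 B_{n+2} (2^{n+2} - 1)/(n+2)`, where `B_k`
is the `k`-th Bernoulli number (with the convention `B_1 = -1/2`). -/
def ads (n : ℕ) : ℚ :=
  4 * bernoulli (n + 2) * (2 ^ (n + 2) - 1) / (n + 2)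

open PowerSeries in
lemma aux_ps : (rescale (2:ℚ) (bernoulliPowerSeries ℚ) - bernoulliPowerSeries ℚ) * (exp ℚ + 1)
    = -X := by
  have h1 := bernoulliPowerSeries_mul_exp_sub_one ℚ
  have h2 := congrArg (rescale (2:ℚ)) h1
  have h3 : exp ℚ ^ 2 = rescale (2:ℚ) (exp ℚ) := by
    have := exp_pow_eq_rescale_exp (A := ℚ) 2
    simpa using this
  have hX : rescale (2:ℚ) (X : PowerSeries ℚ) = 2 * X := by
    rw [rescale_X]; rfl
  rw [map_mul, map_sub, map_one, ← h3, hX] at h2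
  have hne : exp ℚ - 1 ≠ 0 := by
    intro h
    rw [h, mul_zero] at h1
    exact X_ne_zero h1.symm
  apply mul_right_cancel₀ hne
  linear_combination h2 - (exp ℚ + 1) * h1

open PowerSeries in
lemma aux_sum (N : ℕ) (hN : 2 ≤ N) :
    ∑ k ∈ Finset.range N, (N.choose k : ℚ) * (bernoulli k * (2 ^ k - 1))
      + 2 * (bernoulli N * (2 ^ N - 1)) = 0 := by
  have h := congrArg (coeff N) aux_ps
  rw [mul_add, mul_one, map_add, coeff_mul, Finset.Nat.sum_antidiagonal_eq_sum_range_succ_mk,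
    map_neg, coeff_X, if_neg (by omega), neg_zero] at h
  have hc : ∀ k, coeff k (rescale (2:ℚ) (bernoulliPowerSeries ℚ) - bernoulliPowerSeries ℚ)
      = bernoulli k * (2 ^ k - 1) / (k.factorial : ℚ) := by
    intro k
    simp only [map_sub, coeff_rescale, bernoulliPowerSeries, coeff_mk]
    simp
    ring
  simp only [hc, coeff_exp] at h
  have hf : (N.factorial : ℚ) ≠ 0 := by positivity
  have h' := congrArg (fun x => (N.factorial : ℚ) * x) h
  simp only [mul_add, mul_zero, Finset.mul_sum] at h'
  rw [← h']
  have e : ∀ k ∈ Finset.range (N+1), (N.factorial : ℚ) * (bernoulli k * (2 ^ k - 1) /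
      (k.factorial : ℚ) * (algebraMap ℚ ℚ) (1 / ((N - k).factorial : ℚ)))
      = (N.choose k : ℚ) * (bernoulli k * (2 ^ k - 1)) := by
    intro k hk
    rw [Nat.cast_choose ℚ (Nat.lt_succ_iff.mp (Finset.mem_range.mp hk))]
    simp only [Algebra.algebraMap_self, RingHom.id_apply]
    field_simp
  rw [Finset.sum_congr rfl e, Finset.sum_range_succ, Nat.choose_self]
  field_simp
  push_cast
  ring

/-- The angle defect sequence satisfies the recursion `a_0 = 1` and
`a_n + Σ_{i=0}^{n-1} (a_i/2) C(n+1, i+1) = 1` for all positive `n`. -/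
theorem ads_recursion :
    ads 0 = 1 ∧
      ∀ n : ℕ, 0 < n →
        ads n + ∑ i ∈ Finset.range n, ads i / 2 * ((n + 1).choose (i + 1) : ℚ) = 1 := by
  refine ⟨by norm_num [ads, bernoulli_two], fun n hn => ?_⟩
  have h := aux_sum (n + 2) (by omega)
  rw [Finset.sum_range_succ', Finset.sum_range_succ'] at h
  have hn2 : (n : ℚ) + 2 ≠ 0 := by positivity
  have e : ∀ i ∈ Finset.range n, ads i / 2 * ((n + 1).choose (i + 1) : ℚ)
      = 2 / ((n : ℚ) + 2) * (((n + 2).choose (i + 1 + 1) : ℚ) *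
        (bernoulli (i + 1 + 1) * (2 ^ (i + 1 + 1) - 1))) := by
    intro i _
    have hc := Nat.add_one_mul_choose_eq (n + 1) (i + 1)
    have hc' : ((n : ℚ) + 2) * ((n + 1).choose (i + 1) : ℚ)
        = ((n + 2).choose (i + 1 + 1) : ℚ) * ((i : ℚ) + 2) := by
      have := congrArg (Nat.cast : ℕ → ℚ) hc
      push_cast at this
      linear_combination this
    have hi2 : (i : ℚ) + 2 ≠ 0 := by positivity
    unfold ads
    field_simp
    linear_combination (4 * bernoulli (i + 2) * (2 ^ (i + 2) - 1)) * hc'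
  rw [Finset.sum_congr rfl e, ← Finset.mul_sum]
  generalize (∑ i ∈ Finset.range n, ((n + 2).choose (i + 1 + 1) : ℚ) *
        (bernoulli (i + 1 + 1) * (2 ^ (i + 1 + 1) - 1))) = S at h ⊢
  norm_num at h
  unfold ads
  field_simp
  linear_combination 2 * h

end AngleDefectPaper
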